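/- arXiv:2410.08073 — 6 statements merged into one kernel-verified Lean document; each statement's English description precedes it below -/
import Mathlib

section
/- Fix integers n ≥ 1 and t ≥ 1, and let x, x′ : Fin t → 𝔽₂ⁿ be two t-tuples of n-bit strings that are NOT equal as multisets (i.e., there is no permutation σ of Fin t with x′ = x ∘ σ). Then the number of a ∈ 𝔽₂ⁿ satisfying ∑_{j=1}^{t} χ(a, x_j) = ∑_{j=1}^{t} χ(a, x′_j) (sums taken in ℤ) is at most (1 − 1/(2t))·2ⁿ; equivalently, 2t · #{a ∈ 𝔽₂ⁿ : ∑_j χ(a, x_j) = ∑_j χ(a, x′_j)} ≤ (2t − 1)·2ⁿ. -/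
/-- The integer-valued character `χ(a, x) = (-1)^{⟨a,x⟩}` on `𝔽₂ⁿ`. -/
def chi {ι : Type*} [Fintype ι] (a x : ι → ZMod 2) : ℤ :=
  if ∑ i, a i * x i = 0 then 1 else -1

theorem chi_shift {n : ℕ} (a x : Fin n → ZMod 2) (i : Fin n) :
    chi (a + Pi.single i 1) x = (if x i = 0 then 1 else -1) * chi a x := by
  have h : ∑ k, (a + Pi.single i 1 : Fin n → ZMod 2) k * x k = (∑ k, a k * x k) + x i := by
    simp [add_mul, Finset.sum_add_distrib, Pi.single_apply]
  unfold chi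
  rw [h]
  generalize (∑ k, a k * x k) = u
  generalize x i = v
  revert u v
  decide

theorem chi_self {n : ℕ} (a x : Fin n → ZMod 2) : chi a x * chi a x = 1 := by
  unfold chi
  split_ifs <;> simp

theorem chi_abs {n : ℕ} (a x : Fin n → ZMod 2) : |chi a x| = 1 := by
  unfold chi
  split_ifs <;> simp

theorem chi_orth {n : ℕ} (x y : Fin n → ZMod 2) :
    ∑ a, chi a x * chi a y = if x = y then (2 : ℤ) ^ n else 0 := by
  split_ifs with h
  · subst h
    simp [chi_self, ZMod.card]
  · obtain ⟨i, hi⟩ := Function.ne_iff.mp h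
    have h1 : ∑ a : Fin n → ZMod 2, chi a x * chi a y
        = ∑ a : Fin n → ZMod 2, chi (a + Pi.single i 1) x * chi (a + Pi.single i 1) y := by
      rw [← Equiv.sum_comp (Equiv.addRight (Pi.single i 1 : Fin n → ZMod 2))]
      simp only [Equiv.coe_addRight]
    have h2 : ∑ a : Fin n → ZMod 2, chi (a + Pi.single i 1) x * chi (a + Pi.single i 1) y
        = ∑ a, -(chi a x * chi a y) := by
      apply Finset.sum_congr rfl
      intro a _
      rw [chi_shift, chi_shift]
      have h3 : ∀ u v : ZMod 2, u ≠ v →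
          (if u = 0 then (1 : ℤ) else -1) * (if v = 0 then 1 else -1) = -1 := by decide
      linear_combination (chi a x * chi a y) * h3 _ _ hi
    rw [Finset.sum_neg_distrib] at h2
    linarith

theorem chi_count {n t : ℕ} (x : Fin t → Fin n → ZMod 2) (y : Fin n → ZMod 2) :
    ∑ a, (∑ j, chi a (x j)) * chi a y
      = 2 ^ n * (((Finset.univ.val.map x).count y : ℕ) : ℤ) := by
  simp_rw [Finset.sum_mul]
  rw [Finset.sum_comm]
  simp_rw [chi_orth]
  rw [Multiset.count_map, ← Finset.sum_filter, Finset.sum_const, nsmul_eq_mul, mul_comm]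
  congr 2
  simp only [eq_comm]
  rfl

theorem chi_bound {n t : ℕ} (x : Fin t → Fin n → ZMod 2) (a : Fin n → ZMod 2) :
    |∑ j, chi a (x j)| ≤ t := by
  refine (Finset.abs_sum_le_sum_abs _ _).trans ?_
  simp [chi_abs]

/-- If the tuples `x, x'` are not equal as multisets, then the set of `a ∈ 𝔽₂ⁿ` where
`∑_j χ(a, x_j) = ∑_j χ(a, x'_j)` has size at most `(1 - 1/(2t))·2ⁿ`. -/
theorem stmt0 (n t : ℕ) (hn : 1 ≤ n) (ht : 1 ≤ t)
    (x x' : Fin t → (Fin n → ZMod 2))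
    (hne : ¬ ∃ σ : Equiv.Perm (Fin t), x' = x ∘ σ) :
    2 * t * (Finset.univ.filter
      (fun a : Fin n → ZMod 2 =>
        (∑ j, chi a (x j)) = ∑ j, chi a (x' j))).card ≤ (2 * t - 1) * 2 ^ n := by
  classical
  have hm : ∃ y, (Finset.univ.val.map x').count y ≠ (Finset.univ.val.map x).count y := by
    by_contra! hc
    have hf : ∀ y, Fintype.card {j // x' j = y} = Fintype.card {j // x j = y} := by
      intro y
      have := hc y
      rw [Multiset.count_map, Multiset.count_map] at this
      rw [Fintype.card_subtype, Fintype.card_subtype]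
      simp only [eq_comm (b := y)]
      exact this
    refine hne ⟨Equiv.ofFiberEquiv (f := x') (g := x)
      (fun y => Fintype.equivOfCardEq (hf y)), ?_⟩
    funext j
    exact (Equiv.ofFiberEquiv_map _ j).symm
  obtain ⟨y, hy⟩ := hm
  set P : (Fin n → ZMod 2) → Prop := fun a => (∑ j, chi a (x j)) = ∑ j, chi a (x' j) with hP
  have hsum : ∑ a, ((∑ j, chi a (x j)) - ∑ j, chi a (x' j)) * chi a y
      = 2 ^ n * ((((Finset.univ.val.map x).count y : ℕ) : ℤ)
        - (((Finset.univ.val.map x').count y : ℕ) : ℤ)) := by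
    simp_rw [sub_mul]
    rw [Finset.sum_sub_distrib, chi_count, chi_count]
    ring
  have hlow : (2 : ℤ) ^ n ≤ |∑ a, ((∑ j, chi a (x j)) - ∑ j, chi a (x' j)) * chi a y| := by
    rw [hsum, abs_mul, abs_of_pos (by positivity : (0 : ℤ) < 2 ^ n)]
    apply le_mul_of_one_le_right (by positivity)
    apply Int.one_le_abs
    omega
  have hup : |∑ a, ((∑ j, chi a (x j)) - ∑ j, chi a (x' j)) * chi a y|
      ≤ ∑ a, if ¬ P a then (2 * t : ℤ) else 0 := by
    refine (Finset.abs_sum_le_sum_abs _ _).trans (Finset.sum_le_sum ?_)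
    intro a _
    rw [abs_mul, chi_abs, mul_one]
    by_cases h : P a
    · rw [if_neg (not_not.mpr h), sub_eq_zero.mpr h, abs_zero]
    · rw [if_pos h]
      have h1 := abs_le.mp (chi_bound x a)
      have h2 := abs_le.mp (chi_bound x' a)
      rw [abs_le]
      constructor <;> linarith [h1.1, h1.2, h2.1, h2.2]
  rw [← Finset.sum_filter, Finset.sum_const, nsmul_eq_mul] at hup
  have hcard := Finset.card_filter_add_card_filter_not (s := (Finset.univ : Finset (Fin n → ZMod 2))) P
  have hu : (Finset.univ : Finset (Fin n → ZMod 2)).card = 2 ^ n := by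
    simp [ZMod.card]
  rw [hu] at hcard
  have hfin := hlow.trans hup
  zify [show 1 ≤ 2 * t by omega] at hcard ⊢
  have : ((Finset.univ.filter P).card : ℤ)
    = 2 ^ n - ((Finset.univ.filter (fun a => ¬ P a)).card : ℤ) := by linarith
  have h4 : 2 * (t : ℤ) * ((Finset.univ.filter P).card : ℤ) ≤ (2 * t - 1) * 2 ^ n := by
    rw [this]
    linarith
  convert h4
end

section
/- Let n ≥ 1, t ≥ 1 and q be integers with t < 2^{n−1} and q > 2t. Let S, S′ be multisets of elements of 𝔽₂ⁿ, each of cardinality t, with S ≠ S′, and for z ∈ 𝔽₂ⁿ set S_z := ∑_{x ∈ S} χ(z, x) ∈ ℤ (counted with multiplicity), and similarly S′_z. Then ∑_{θ : 𝔽₂ⁿ → Fin q} e_q( ∑_{z ∈ 𝔽₂ⁿ} θ_z · (S_z − S′_z) ) = 0 in ℂ. -/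
/-- `e_q(s) = exp(2πi·s/q)`. -/
noncomputable def expq (q : ℕ) (s : ℤ) : ℂ :=
  Complex.exp (2 * Real.pi * Complex.I * s / q)


lemma sgn_add (a b : ZMod 2) : (if a + b = 0 then (1 : ℤ) else -1) =
    (if a = 0 then (1 : ℤ) else -1) * (if b = 0 then (1 : ℤ) else -1) := by
  revert a b; decide

lemma chi_add_right {n : ℕ} (z x y : Fin n → ZMod 2) : chi z (x + y) = chi z x * chi z y := by
  unfold chi
  rw [← sgn_add, ← Finset.sum_add_distrib]
  simp only [Pi.add_apply, mul_add]

lemma chi_add_left {n : ℕ} (z w x : Fin n → ZMod 2) : chi (z + w) x = chi z x * chi w x := by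
  unfold chi
  rw [← sgn_add, ← Finset.sum_add_distrib]
  simp only [Pi.add_apply, add_mul]

lemma sum_chi {n : ℕ} (x : Fin n → ZMod 2) (hx : x ≠ 0) : ∑ z, chi z x = 0 := by
  obtain ⟨i, hi⟩ := Function.ne_iff.mp hx
  have h1 : chi (Pi.single i 1) x = -1 := by
    unfold chi
    have : ∑ j, (Pi.single i 1 : Fin n → ZMod 2) j * x j = x i := by
      simp [Pi.single_apply]
    rw [this]
    exact if_neg hi
  have h2 := Equiv.sum_comp (Equiv.addRight (Pi.single i 1 : Fin n → ZMod 2)) (fun z => chi z x)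
  simp only [Equiv.coe_addRight, chi_add_left, h1, ← Finset.sum_mul] at h2
  linarith

lemma sum_chi_mul {n : ℕ} (x y : Fin n → ZMod 2) :
    ∑ z, chi z y * chi z x = if y = x then (2 : ℤ) ^ n else 0 := by
  simp only [← chi_add_right]
  split_ifs with h
  · subst h
    have : y + y = 0 := by
      funext i
      exact CharTwo.add_self_eq_zero _
    rw [this]
    simp [chi]
  · apply sum_chi
    intro h0
    apply h
    funext i
    have := congrFun h0 i
    exact CharTwo.add_eq_zero.mp this

lemma inversion {n : ℕ} (S : Multiset (Fin n → ZMod 2)) (y : Fin n → ZMod 2) :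
    ∑ z, chi z y * (S.map fun x => chi z x).sum = 2 ^ n * (S.count y : ℤ) := by
  induction S using Multiset.induction with
  | empty => simp
  | cons a S ih =>
    simp only [Multiset.map_cons, Multiset.sum_cons, mul_add, Finset.sum_add_distrib, ih,
      sum_chi_mul, Multiset.count_cons]
    split_ifs <;> push_cast <;> ring

lemma abs_sum_chi_le {n : ℕ} (S : Multiset (Fin n → ZMod 2)) (z : Fin n → ZMod 2) :
    |(S.map fun x => chi z x).sum| ≤ (Multiset.card S : ℤ) := by
  induction S using Multiset.induction with
  | empty => simp
  | cons a S ih =>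
    simp only [Multiset.map_cons, Multiset.sum_cons, Multiset.card_cons]
    have : |chi z a| = 1 := by unfold chi; split_ifs <;> simp
    have := abs_add_le (chi z a) (S.map fun x => chi z x).sum
    push_cast
    linarith

lemma expq_sum {α : Type*} (q : ℕ) (s : Finset α) (f : α → ℤ) :
    expq q (∑ z ∈ s, f z) = ∏ z ∈ s, expq q (f z) := by
  unfold expq
  rw [← Complex.exp_sum]
  congr 1
  push_cast
  rw [Finset.mul_sum, Finset.sum_div]

lemma geom_zero (q : ℕ) (hq : 0 < q) (d : ℤ) (hd : d ≠ 0) (hdq : |d| < q) :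
    ∑ k : Fin q, expq q (((k : ℕ) : ℤ) * d) = 0 := by
  have hq0 : (q : ℂ) ≠ 0 := by exact_mod_cast hq.ne'
  have hpow : ∀ k : ℕ, expq q ((k : ℤ) * d) = expq q d ^ k := by
    intro k
    unfold expq
    rw [← Complex.exp_nat_mul]
    congr 1
    push_cast
    ring
  simp only [hpow]
  rw [Fin.sum_univ_eq_sum_range (fun k => expq q d ^ k) q]
  have h1 : expq q d ^ q = 1 := by
    rw [← hpow]
    unfold expq
    rw [Complex.exp_eq_one_iff]
    refine ⟨d, ?_⟩
    push_cast
    field_simp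
  have h2 : expq q d ≠ 1 := by
    unfold expq
    rw [Ne, Complex.exp_eq_one_iff]
    rintro ⟨m, hm⟩
    have hpi := Complex.two_pi_I_ne_zero
    have h3 : (d : ℂ) = m * q := by
      rw [div_eq_iff hq0] at hm
      apply mul_left_cancel₀ hpi
      linear_combination hm
    have h4 : d = m * q := by exact_mod_cast h3
    exact hd (Int.eq_zero_of_abs_lt_dvd ⟨m, by rw [h4, mul_comm]⟩ hdq)
  rw [geom_sum_eq h2, h1]
  simp

/-- Orthogonality of the FHFHF set states for distinct multisets `S ≠ S'` of size `t < 2^{n-1}`: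
the phase sum `∑_θ e_q(∑_z θ_z (S_z - S'_z))` vanishes (where `S_z = ∑_{x∈S} χ(z,x)`). -/
theorem stmt4 (n t q : ℕ) (hn : 1 ≤ n) (ht : 1 ≤ t) (htn : t < 2 ^ (n - 1)) (hq : 2 * t < q)
    (S S' : Multiset (Fin n → ZMod 2))
    (hS : Multiset.card S = t) (hS' : Multiset.card S' = t) (hne : S ≠ S') :
    ∑ θ : (Fin n → ZMod 2) → Fin q,
      expq q (∑ z : Fin n → ZMod 2,
        ((θ z : ℕ) : ℤ) *
          ((S.map fun x => chi z x).sum - (S'.map fun x => chi z x).sum)) = 0 := by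
  have hex : ∃ z : Fin n → ZMod 2,
      (S.map fun x => chi z x).sum - (S'.map fun x => chi z x).sum ≠ 0 := by
    by_contra hcon
    push Not at hcon
    apply hne
    ext y
    have h1 := inversion S y
    have h2 := inversion S' y
    have h3 : ∀ z : Fin n → ZMod 2,
        (S.map fun x => chi z x).sum = (S'.map fun x => chi z x).sum :=
      fun z => sub_eq_zero.mp (hcon z)
    simp only [h3] at h1
    rw [h1] at h2
    have h4 := mul_left_cancel₀ (by positivity) h2
    exact_mod_cast h4
  obtain ⟨z, hz⟩ := hex
  simp only [expq_sum]
  have key := Finset.prod_univ_sum (fun _ : Fin n → ZMod 2 => (Finset.univ : Finset (Fin q)))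
    (fun z k => expq q (((k : ℕ) : ℤ) *
          ((S.map fun x => chi z x).sum - (S'.map fun x => chi z x).sum)))
  rw [Fintype.piFinset_univ] at key
  rw [← key]
  apply Finset.prod_eq_zero (Finset.mem_univ z)
  apply geom_zero q (by omega) _ hz
  have h1 := abs_sum_chi_le S z
  have h2 := abs_sum_chi_le S' z
  have h3 := abs_sub (S.map fun x => chi z x).sum (S'.map fun x => chi z x).sum
  rw [hS] at h1
  rw [hS'] at h2
  have : (2 * t : ℤ) < q := by exact_mod_cast hq
  linarith
end

section
/- Let t > 1 and n ≥ 1 be integers, let σ be a permutation of Fin t that is a single t-cycle (a cycle whose support is all of Fin t), and let z : Fin t → 𝔽₂ⁿ be a tuple that is not constant. Then ∑_{w : Fin t → 𝔽₂ⁿ} ∏_{i ∈ Fin t} χ(w_i + w_{σ(i)}, z_i) = 0, where the sum (in ℤ) ranges over all 2^{nt} tuples w. -/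
theorem chi_add_left_s5 {ι : Type*} [Fintype ι] (a b x : ι → ZMod 2) :
    chi (a + b) x = chi a x * chi b x := by
  unfold chi
  simp only [Pi.add_apply, add_mul, Finset.sum_add_distrib]
  generalize ∑ i, a i * x i = p
  generalize ∑ i, b i * x i = q
  revert p q
  decide

theorem chi_single {ι : Type*} [Fintype ι] [DecidableEq ι] (k : ι) (x : ι → ZMod 2) :
    chi (Pi.single k 1) x = if x k = 0 then 1 else -1 := by
  unfold chi
  simp [Pi.single_apply]

theorem prod_chi {n t : ℕ} (σ : Equiv.Perm (Fin t)) (z w : Fin t → (Fin n → ZMod 2)) :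
    ∏ i, chi (w i + w (σ i)) (z i) = ∏ i, (chi (w i) (z i) * chi (w i) (z (σ.symm i))) := by
  simp only [chi_add_left_s5, Finset.prod_mul_distrib]
  congr 1
  rw [← Equiv.prod_comp σ (fun i => chi (w i) (z (σ.symm i)))]
  simp

/-- For a single `t`-cycle `σ` and a non-constant tuple `z`, the sum over all tuples `w` of
`∏_i χ(w_i ⊕ w_{σ(i)}, z_i)` vanishes. -/
theorem stmt5 (n t : ℕ) (hn : 1 ≤ n) (ht : 1 < t)
    (σ : Equiv.Perm (Fin t)) (hσ : σ.IsCycle ∧ σ.support = Finset.univ)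
    (z : Fin t → (Fin n → ZMod 2)) (hz : ¬ ∀ i j, z i = z j) :
    ∑ w : Fin t → (Fin n → ZMod 2), ∏ i, chi (w i + w (σ i)) (z i) = 0 := by
  obtain ⟨j, hj⟩ : ∃ j, z (σ j) ≠ z j := by
    by_contra! h
    apply hz
    have hp : ∀ (m : ℕ) i, z ((σ ^ m) i) = z i := by
      intro m
      induction m with
      | zero => simp
      | succ m ih => intro i; rw [pow_succ, Equiv.Perm.mul_apply, ih, h]
    intro a b
    have hs : ∀ a, σ a ≠ a := fun a => by
      rw [← Equiv.Perm.mem_support, hσ.2]; exact Finset.mem_univ a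
    obtain ⟨m, hm⟩ := hσ.1.exists_pow_eq (hs a) (hs b)
    rw [← hm, hp]
  obtain ⟨k, hk⟩ := Function.ne_iff.mp hj
  simp only [prod_chi]
  have chi_zero : ∀ x : Fin n → ZMod 2, chi 0 x = 1 := fun x => by simp [chi]
  let v : Fin t → (Fin n → ZMod 2) := Pi.single (σ j) (Pi.single k 1)
  have hv : ∏ i, (chi (v i) (z i) * chi (v i) (z (σ.symm i))) = -1 := by
    rw [Finset.prod_eq_single (σ j)]
    · simp only [v, Pi.single_eq_same, chi_single, Equiv.symm_apply_apply]
      revert hk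
      generalize z (σ j) k = p
      generalize z j k = q
      revert p q
      decide
    · intro b _ hb
      simp [v, Pi.single_eq_of_ne hb, chi_zero]
    · simp
  have key := Equiv.sum_comp (Equiv.addRight v)
    (fun w : Fin t → (Fin n → ZMod 2) => ∏ i, (chi (w i) (z i) * chi (w i) (z (σ.symm i))))
  have h2 : ∀ w : Fin t → (Fin n → ZMod 2),
      ∏ i, (chi ((w + v) i) (z i) * chi ((w + v) i) (z (σ.symm i)))
        = - ∏ i, (chi (w i) (z i) * chi (w i) (z (σ.symm i))) := by
    intro w
    rw [← mul_neg_one, ← hv, ← Finset.prod_mul_distrib]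
    refine Finset.prod_congr rfl fun i _ => ?_
    rw [Pi.add_apply, chi_add_left_s5, chi_add_left_s5]
    ring
  simp only [Equiv.coe_addRight, h2, Finset.sum_neg_distrib] at key
  linarith
end

section
/- Let n = 2ν be an even integer with ν ≥ 1, let m ≥ 1 be an integer, and let A : Fin m → 𝔽₂ⁿ and θ : Fin m → ℝ be arbitrary. Define the 2^ν × 2^ν complex partition matrix Λ indexed by pairs (a, b) ∈ 𝔽₂^ν × 𝔽₂^ν via Λ_{a,b} := ∏_{r ∈ Fin m} Complex.exp( i·θ_r · χ(A_r, (a,b)) ), where (a,b) ∈ 𝔽₂ⁿ denotes the concatenation of a and b. Then the rank of Λ (equivalently, of the reduced density matrix 2^{−n} Λ Λ† of the Hamiltonian phase state across the half cut) is at most 16^m. -/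
/-- The partition matrix `Λ_{a,b} = ∏_r exp(i·θ_r·χ(A_r, (a,b)))` of the Hamiltonian phase
state across the half cut; here `n = 2ν` and `(a,b)` is the concatenation of `a, b`. -/
noncomputable def lam (ν m : ℕ) (A : Fin m → ((Fin ν ⊕ Fin ν) → ZMod 2))
    (θ : Fin m → ℝ) : Matrix (Fin ν → ZMod 2) (Fin ν → ZMod 2) ℂ :=
  Matrix.of fun a b =>
    ∏ r, Complex.exp (Complex.I * (θ r : ℂ) * (chi (A r) (Sum.elim a b) : ℂ))

/-- The rank of the partition matrix of a Hamiltonian phase state with `m` terms across the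
half cut is at most `16^m`. -/
theorem stmt11 (ν m : ℕ) (hν : 1 ≤ ν) (hm : 1 ≤ m)
    (A : Fin m → ((Fin ν ⊕ Fin ν) → ZMod 2)) (θ : Fin m → ℝ) :
    (lam ν m A θ).rank ≤ 16 ^ m := by
  classical
  set P : Matrix (Fin ν → ZMod 2) (Fin m → ZMod 2) ℂ := Matrix.of fun a s =>
    if s = (fun r => ∑ i, A r (Sum.inl i) * a i) then 1 else 0 with hP
  set Q : Matrix (Fin m → ZMod 2) (Fin ν → ZMod 2) ℂ := Matrix.of fun s b =>
    ∏ r, Complex.exp (Complex.I * (θ r : ℂ) *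
      (((if s r + ∑ i, A r (Sum.inr i) * b i = 0 then 1 else -1 : ℤ)) : ℂ)) with hQ
  have h : lam ν m A θ = P * Q := by
    ext a b
    simp only [hP, hQ, Matrix.mul_apply, Matrix.of_apply, ite_mul, one_mul, zero_mul,
      Finset.sum_ite_eq', Finset.sum_ite_eq, Finset.mem_univ, if_true, lam, chi,
      Fintype.sum_sum_type, Sum.elim_inl, Sum.elim_inr]
  rw [h]
  calc (P * Q).rank ≤ P.rank := Matrix.rank_mul_le_left P Q
    _ ≤ Fintype.card (Fin m → ZMod 2) := Matrix.rank_le_card_width P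
    _ = 2 ^ m := by simp [ZMod.card]
    _ ≤ 16 ^ m := Nat.pow_le_pow_left (by norm_num) m
end

section
/- Let n ≥ 1 and m ≥ 1 be integers, let R be an invertible n × n matrix over ZMod 2, let A : Fin m → 𝔽₂ⁿ be a list of architecture rows, and let θ : Fin m → ℝ. Let P be the complex permutation matrix indexed by 𝔽₂ⁿ with P_{x,y} := 1 if y = R·x (matrix–vector product over ZMod 2) and 0 otherwise, and let D^{A}_θ be the diagonal complex matrix indexed by 𝔽₂ⁿ with diagonal entries (D^{A}_θ)_{x,x} := Complex.exp( i · ∑_{r ∈ Fin m} θ_r · χ(A_r, x) ). Then P · D^{A}_θ · P† = D^{A·R}_θ, where the r-th row of A·R is the vector x ↦ ∑_j (A_r)_j · R_{j,x} over ZMod 2 (i.e., the row vector A_r multiplied by R). -/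
/-- The permutation matrix `P_{x,y} = [y = R·x]` implementing the basis permutation
`|x⟩ ↦ |R⁻¹ x⟩` of a CNOT circuit. -/
def permMat (n : ℕ) (R : Matrix (Fin n) (Fin n) (ZMod 2)) :
    Matrix (Fin n → ZMod 2) (Fin n → ZMod 2) ℂ :=
  Matrix.of fun x y => if y = R.mulVec x then 1 else 0

/-- The diagonal phase matrix `D^A_θ` with entries `exp(i ∑_r θ_r χ(A_r, x))`. -/
noncomputable def diagMat (n m : ℕ) (A : Fin m → (Fin n → ZMod 2)) (θ : Fin m → ℝ) :
    Matrix (Fin n → ZMod 2) (Fin n → ZMod 2) ℂ :=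
  Matrix.diagonal fun x => Complex.exp (Complex.I * ∑ r, (θ r : ℂ) * (chi (A r) x : ℂ))

/-- Conjugating the diagonal phase matrix `D^A_θ` by the CNOT-circuit permutation unitary `P`
re-randomizes the architecture: `P · D^A_θ · P† = D^{A·R}_θ`, where the `r`-th row of `A·R`
is the row vector `A_r` multiplied by `R`. -/
theorem stmt12 (n m : ℕ) (hn : 1 ≤ n) (hm : 1 ≤ m)
    (R : Matrix (Fin n) (Fin n) (ZMod 2)) (hR : IsUnit R)
    (A : Fin m → (Fin n → ZMod 2)) (θ : Fin m → ℝ) :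
    permMat n R * diagMat n m A θ * (permMat n R).conjTranspose =
      diagMat n m (fun r => Matrix.vecMul (A r) R) θ := by
  have hinj : Function.Injective R.mulVec := Matrix.mulVec_injective_of_isUnit hR
  have hchi : ∀ (a x : Fin n → ZMod 2), chi (Matrix.vecMul a R) x = chi a (R.mulVec x) := by
    intro a x
    have h : ∑ i, Matrix.vecMul a R i * x i = ∑ i, a i * R.mulVec x i :=
      (Matrix.dotProduct_mulVec a R x).symm
    unfold chi
    rw [h]
  ext x y
  unfold diagMat
  rw [Matrix.mul_apply]
  simp only [Matrix.mul_diagonal, Matrix.conjTranspose_apply, permMat, Matrix.of_apply, hchi,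
    Matrix.diagonal_apply, ite_mul, one_mul, zero_mul, Finset.sum_ite_eq', Finset.sum_ite_eq,
    Finset.mem_univ, if_true, hinj.eq_iff]
  split_ifs <;> simp
end

section
/- Let α and β be nonempty finite types, let ρ be a complex matrix indexed by α × β that is positive semidefinite with trace 1, and let Λ be a complex matrix indexed by β that is an orthogonal projection (Λ is Hermitian and Λ·Λ = Λ). Write 1⊗Λ for the matrix with entries (1⊗Λ)_{(a,b),(a′,b′)} := (if a = a′ then Λ_{b,b′} else 0), and for a matrix M indexed by α × β define its partial trace over β as the α-indexed matrix Tr_β(M)_{a,a′} := ∑_{b} M_{(a,b),(a′,b)}. Then the matrix Tr_β(ρ) − Tr_β((1⊗Λ)·ρ·(1⊗Λ)) is positive semidefinite, and its trace equals 1 − Tr((1⊗Λ)·ρ); consequently its trace norm equals 1 − Tr((1⊗Λ)·ρ). -/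
open scoped ComplexOrder

/-- The trace norm of a square complex matrix: the sum of its singular values, i.e. of the
square roots of the eigenvalues of `Mᴴ·M`. -/
noncomputable def traceNorm {k : Type*} [Fintype k] [DecidableEq k] (M : Matrix k k ℂ) : ℝ :=
  ∑ i, Real.sqrt ((Matrix.posSemidef_conjTranspose_mul_self M).1.eigenvalues i)

/-- The operator `1 ⊗ Λ` on the bipartite space, with entries
`(1⊗Λ)_{(a,b),(a',b')} = [a = a']·Λ_{b,b'}`. -/
def oneTensor {α β : Type*} [DecidableEq α] (Λ : Matrix β β ℂ) :
    Matrix (α × β) (α × β) ℂ :=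
  Matrix.of fun p p' => if p.1 = p'.1 then Λ p.2 p'.2 else 0

/-- The partial trace over the second factor `β`. -/
noncomputable def ptraceB {α β : Type*} [Fintype β] (M : Matrix (α × β) (α × β) ℂ) :
    Matrix α α ℂ :=
  Matrix.of fun a a' => ∑ b, M (a, b) (a', b)

theorem traceNorm_of_posSemidef {k : Type*} [Fintype k] [DecidableEq k] (M : Matrix k k ℂ)
    (hM : M.PosSemidef) : traceNorm M = M.trace.re := by
  have hH := hM.1
  have hc : (M.conjTranspose * M).charpoly =
      ∏ i, (Polynomial.X - Polynomial.C (((hH.eigenvalues i ^ 2 : ℝ) : ℂ))) := by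
    rw [hH.eq]
    conv_lhs => rw [hH.spectral_theorem, ← map_mul, Unitary.conjStarAlgAut_apply,
      Matrix.charpoly_mul_comm, ← mul_assoc]
    simp [Matrix.charpoly_diagonal, sq]
  have hr := congrArg Polynomial.roots hc
  rw [(Matrix.posSemidef_conjTranspose_mul_self M).1.roots_charpoly_eq_eigenvalues,
    Polynomial.roots_prod _ _
      (Finset.prod_ne_zero_iff.2 fun i _ => Polynomial.X_sub_C_ne_zero _)] at hr
  simp only [Polynomial.roots_X_sub_C, Multiset.bind_singleton] at hr
  have h2 := congrArg (fun s : Multiset ℂ => (s.map (fun z => Real.sqrt z.re)).sum) hr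
  simp only [Multiset.map_map] at h2
  have h3 : traceNorm M = ∑ i, Real.sqrt (hH.eigenvalues i ^ 2) := by
    exact h2
  rw [h3, hH.trace_eq_sum_eigenvalues]
  simp [Real.sqrt_sq (hM.eigenvalues_nonneg _)]

theorem ptraceB_comm {α β : Type*} [Fintype α] [Fintype β] [DecidableEq α]
    (Λ : Matrix β β ℂ) (X : Matrix (α × β) (α × β) ℂ) :
    ptraceB (oneTensor Λ * X) = ptraceB (X * oneTensor Λ) := by
  ext a a'
  simp only [ptraceB, oneTensor, Matrix.of_apply, Matrix.mul_apply, Fintype.sum_prod_type_right]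
  simp only [ite_mul, mul_ite, zero_mul, mul_zero, Finset.sum_ite_eq, Finset.sum_ite_eq',
    Finset.mem_univ, if_true]
  rw [Finset.sum_comm]
  simp only [mul_comm]

theorem ptraceB_trace {α β : Type*} [Fintype α] [Fintype β]
    (X : Matrix (α × β) (α × β) ℂ) : (ptraceB X).trace = X.trace := by
  simp [ptraceB, Matrix.trace, Fintype.sum_prod_type]

theorem ptraceB_sub {α β : Type*} [Fintype β]
    (X Y : Matrix (α × β) (α × β) ℂ) : ptraceB (X - Y) = ptraceB X - ptraceB Y := by
  ext a a'
  simp [ptraceB]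

theorem ptraceB_posSemidef {α β : Type*} [Fintype α] [Fintype β]
    (X : Matrix (α × β) (α × β) ℂ) (hX : X.PosSemidef) : (ptraceB X).PosSemidef := by
  have : ptraceB X = ∑ b : β, X.submatrix (fun a => (a, b)) (fun a => (a, b)) := by
    ext a a'
    simp [ptraceB, Matrix.sum_apply]
  rw [this]
  exact Matrix.posSemidef_sum _ fun b _ => hX.submatrix _

theorem oneTensor_herm {α β : Type*} [DecidableEq α]
    (Λ : Matrix β β ℂ) (hΛ : Λ.IsHermitian) :
    (oneTensor Λ : Matrix (α × β) (α × β) ℂ).IsHermitian := by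
  ext p q
  simp only [Matrix.conjTranspose_apply, oneTensor, Matrix.of_apply, eq_comm (a := q.1)]
  split_ifs
  · exact hΛ.apply _ _
  · simp

theorem oneTensor_proj {α β : Type*} [Fintype α] [Fintype β] [DecidableEq α]
    (Λ : Matrix β β ℂ) (hproj : Λ * Λ = Λ) :
    (oneTensor Λ * oneTensor Λ : Matrix (α × β) (α × β) ℂ) = oneTensor Λ := by
  ext p q
  conv_rhs => rw [← hproj]
  simp only [oneTensor, Matrix.of_apply, Matrix.mul_apply, Fintype.sum_prod_type_right]
  simp only [ite_mul, zero_mul, Finset.sum_ite_eq, Finset.mem_univ, if_true]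
  split_ifs <;> simp

/-- Un-normalized gentle measurement lemma: for a state `ρ` on `α ⊗ β` and a projector `Λ`
on `β`, the matrix `Tr_β(ρ) - Tr_β((1⊗Λ)ρ(1⊗Λ))` is positive semidefinite, its trace equals
`1 - Tr((1⊗Λ)ρ)`, and consequently its trace norm equals `1 - Tr((1⊗Λ)ρ)`. -/
theorem stmt13 {α β : Type*} [Fintype α] [Fintype β] [DecidableEq α] [DecidableEq β]
    [Nonempty α] [Nonempty β]
    (ρ : Matrix (α × β) (α × β) ℂ) (hρ : ρ.PosSemidef) (htr : ρ.trace = 1)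
    (Λ : Matrix β β ℂ) (hΛ : Λ.IsHermitian) (hproj : Λ * Λ = Λ) :
    (ptraceB ρ - ptraceB (oneTensor Λ * ρ * oneTensor Λ)).PosSemidef ∧
    (ptraceB ρ - ptraceB (oneTensor Λ * ρ * oneTensor Λ)).trace =
      1 - (oneTensor Λ * ρ).trace ∧
    traceNorm (ptraceB ρ - ptraceB (oneTensor Λ * ρ * oneTensor Λ)) =
      (1 - (oneTensor Λ * ρ).trace).re := by
  set P : Matrix (α × β) (α × β) ℂ := oneTensor Λ with hP
  have hPP : P * P = P := oneTensor_proj Λ hproj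
  have hPH : P.IsHermitian := oneTensor_herm Λ hΛ
  have h1 : ptraceB (P * ρ * P) = ptraceB (P * ρ) := by
    rw [hP, ← ptraceB_comm, ← mul_assoc, ← hP, hPP]
  have h2 : ptraceB ρ - ptraceB (P * ρ * P) = ptraceB ((1 - P) * ρ * (1 - P).conjTranspose) := by
    have hQ : (1 - P).conjTranspose = 1 - P := by simp [hPH.eq]
    have e : (1 - P) * ρ * (1 - P) = (ρ - P * ρ) - (ρ * P - P * ρ * P) := by
      noncomm_ring
    rw [hQ, e, ptraceB_sub, ptraceB_sub, ptraceB_sub, h1, hP, ptraceB_comm]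
    simp
  have hpos : (ptraceB ρ - ptraceB (P * ρ * P)).PosSemidef := by
    rw [h2]
    exact ptraceB_posSemidef _ (hρ.mul_mul_conjTranspose_same _)
  have htrace : (ptraceB ρ - ptraceB (P * ρ * P)).trace = 1 - (P * ρ).trace := by
    rw [h1, Matrix.trace_sub, ptraceB_trace, ptraceB_trace, htr]
  exact ⟨hpos, htrace, by rw [traceNorm_of_posSemidef _ hpos, htrace]; simp⟩
end
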